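/- As x → ∞, the number of integers n with 1 ≤ n ≤ x failing at least one of the following six conditions is o(x): (1) n > x/log x; (2) the largest squarefull divisor of n is at most log log x; (3) P⁺(n) > x^{1/(10 log log log x)}; (4) P⁺(n)² ∤ n; (5) gcd(n, σ(n)) has no prime factor exceeding log log x; (6) P⁺(n) > P₂⁺(n) · x^{1/(log log log x)²}, where P₂⁺(n) := P⁺(n / P⁺(n)) is the second-largest prime factor of n. -/

import Mathlib

open scoped Classical
open Filter Finset

/-- `sigma1 n` is `σ(n)`, the sum of all positive divisors of `n`. -/
def sigma1 (n : ℕ) : ℕ := ArithmeticFunction.sigma 1 n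

/-- `s n` is the sum of the proper divisors of `n`, i.e. `σ(n) − n`. -/
def s (n : ℕ) : ℕ := sigma1 n - n

/-- The largest prime factor of `n`, with the convention `Pplus 1 = 1`. -/
def Pplus (n : ℕ) : ℕ := if h : n.primeFactors.Nonempty then n.primeFactors.max' h else 1

/-- A positive integer `r` is squarefull if `p² ∣ r` for every prime `p ∣ r`. -/
def Squarefull (r : ℕ) : Prop := ∀ p : ℕ, p.Prime → p ∣ r → p ^ 2 ∣ r

/-!
Each of the six conditions fails only on a sparse set.

A number with a large squarefull divisor `r` is divisible by some `d ^ 2` with `d ^ 3 ≥ r`, and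
`∑ 1 / d ^ 2` converges. The product of the `n ≤ N` with `Pplus n ≤ z` divides `N!` and has only
prime factors up to `z`, so its logarithm is `O(N log z)` and few of them exceed `√N`. If
`Pplus n ^ 2 ∣ n`, then `Pplus n` is small or `n` has a large square divisor.

If a prime `p` divides `n` and `σ(n)`, then `p ∣ σ(q ^ v)` for some prime power `q ^ v` exactly
dividing `n`. Either `v ≥ 2`, and `q ^ v > p / 2` is a large squarefull divisor, or `p ∣ q + 1` and
`p * q ∣ n`. In the latter case, for a fixed `W`, the primes `q ≡ -1` mod `p` fall into at most
`φ(W)` residue classes mod `p * W`, up to a few small exceptions. In a class `a` mod `M`, the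
primes `M * j + a > J` with `j < J` have a product that divides `M ^ J * ∏ (M * j + a)` together
with `J!`, which gives a Chebyshev bound. So the `n` with such `p > y` have density
`O((1 + φ(W) / W * log log x) / y)`, and `φ(W) / W` can be made arbitrarily small.

If the two largest primes `q < p` of `n` are within a factor `X` of each other, then `p * q ∣ n`
with `p / X ≤ q < p`; by Mertens-type bounds such `n` with `p > T` have density
`O((1 + log X) / log T)`, and `T` is chosen with `log X = o(log T)` and `log T = o(log x)`.
-/

section

open Real Topology Asymptotics

/-! ### Sparse sets -/

/-- A property `P x n`, with a real parameter `x`, is sparse if it holds for only `o(x)` of the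
integers `1 ≤ n ≤ x`. -/
def IsSparse (P : ℝ → ℕ → Prop) : Prop :=
  (fun x : ℝ => (#{n ∈ Icc 1 ⌊x⌋₊ | P x n} : ℝ)) =o[atTop] fun x => x

lemma IsSparse.isLittleO_card_filter {P Q : ℝ → ℕ → Prop} [∀ x, DecidablePred (P x)]
    (hQ : IsSparse Q) (h : ∀ᶠ x in atTop, ∀ n ∈ Icc 1 ⌊x⌋₊, P x n → Q x n) :
    (fun x : ℝ => (#{n ∈ Icc 1 ⌊x⌋₊ | P x n} : ℝ)) =o[atTop] fun x => x := by
  refine IsBigO.trans_isLittleO (IsBigO.of_bound' ?_) hQ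
  filter_upwards [h] with x hx
  rw [norm_of_nonneg (by positivity), norm_of_nonneg (by positivity)]
  exact_mod_cast card_le_card fun n hn => by
    rw [mem_filter] at hn ⊢
    exact ⟨hn.1, hx n hn.1 hn.2⟩

lemma IsSparse.mono {P Q : ℝ → ℕ → Prop} (hQ : IsSparse Q)
    (h : ∀ᶠ x in atTop, ∀ n ∈ Icc 1 ⌊x⌋₊, P x n → Q x n) : IsSparse P :=
  hQ.isLittleO_card_filter h

lemma IsSparse.or {P Q : ℝ → ℕ → Prop} (hP : IsSparse P) (hQ : IsSparse Q) :
    IsSparse fun x n => P x n ∨ Q x n := by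
  refine IsBigO.trans_isLittleO (IsBigO.of_bound' (Eventually.of_forall fun x => ?_))
    (IsLittleO.add hP hQ)
  rw [norm_of_nonneg (by positivity), norm_of_nonneg (by positivity)]
  simp only [filter_or]
  exact_mod_cast card_union_le _ _

lemma isSparse_of_forall_card_le {P : ℝ → ℕ → Prop} [∀ x, DecidablePred (P x)]
    (h : ∀ ε > 0, ∀ᶠ x in atTop, (#{n ∈ Icc 1 ⌊x⌋₊ | P x n} : ℝ) ≤ ε * x) : IsSparse P := by
  refine isLittleO_iff.2 fun ε hε => ?_
  filter_upwards [h ε hε, eventually_ge_atTop 0] with x hx hx0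
  rw [norm_of_nonneg (by positivity), norm_of_nonneg hx0]
  convert hx

lemma isSparse_of_card_le {P : ℝ → ℕ → Prop} [∀ x, DecidablePred (P x)] {g : ℝ → ℝ}
    (hg : Tendsto g atTop (𝓝 0))
    (h : ∀ᶠ x in atTop, (#{n ∈ Icc 1 ⌊x⌋₊ | P x n} : ℝ) ≤ g x * x) : IsSparse P := by
  refine isSparse_of_forall_card_le fun ε hε => ?_
  filter_upwards [h, hg.eventually_le_const hε, eventually_ge_atTop 0] with x hx hgx hx0
  exact hx.trans (by gcongr)

lemma isSparse_le_div {y : ℝ → ℝ} (hy : Tendsto y atTop atTop) :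
    IsSparse fun x n => (n : ℝ) ≤ x / y x := by
  refine isSparse_of_card_le hy.inv_tendsto_atTop ?_
  filter_upwards [eventually_ge_atTop 0, hy.eventually_ge_atTop 0] with x hx hyx
  calc (#{n ∈ Icc 1 ⌊x⌋₊ | ((n : ℕ) : ℝ) ≤ x / y x} : ℝ) ≤ #(Icc 1 ⌊x / y x⌋₊) := by
        gcongr
        intro n hn
        rw [mem_filter, mem_Icc] at hn
        exact mem_Icc.2 ⟨hn.1.1, Nat.le_floor hn.2⟩
    _ ≤ (y⁻¹) x * x := by
        rw [Nat.card_Icc, add_tsub_cancel_right, Pi.inv_apply, inv_mul_eq_div]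
        exact Nat.floor_le (by positivity)

lemma card_filter_exists_dvd_le {ι : Type*} (D : Finset ι) (f : ι → ℕ) {x : ℝ} (hx : 0 ≤ x) :
    (#{n ∈ Icc 1 ⌊x⌋₊ | ∃ d ∈ D, f d ∣ n} : ℝ) ≤ x * ∑ d ∈ D, 1 / (f d : ℝ) := by
  calc (#{n ∈ Icc 1 ⌊x⌋₊ | ∃ d ∈ D, f d ∣ n} : ℝ)
      ≤ #(D.biUnion fun d => {n ∈ Icc 1 ⌊x⌋₊ | f d ∣ n}) := by
        gcongr
        intro n hn
        simp only [mem_filter, mem_biUnion] at hn ⊢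
        exact hn.2.imp fun d hd => ⟨hd.1, hn.1, hd.2⟩
    _ ≤ ∑ d ∈ D, (#{n ∈ Icc 1 ⌊x⌋₊ | f d ∣ n} : ℝ) := by exact_mod_cast card_biUnion_le
    _ ≤ ∑ d ∈ D, x * (1 / (f d : ℝ)) := by
        gcongr with d
        rw [show Icc 1 ⌊x⌋₊ = Ioc 0 ⌊x⌋₊ from rfl, Nat.Ioc_filter_dvd_card_eq_div, mul_one_div]
        exact Nat.cast_div_le.trans (by gcongr; exact Nat.floor_le hx)
    _ = x * ∑ d ∈ D, 1 / (f d : ℝ) := (mul_sum ..).symm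

lemma card_filter_exists_mul_dvd_le (P : ℕ → Prop) [DecidablePred P] (R : ℕ → ℕ → Prop)
    [∀ p, DecidablePred (R p)] (A : ℕ) {x : ℝ} (hx : 0 ≤ x) :
    (#{n ∈ Icc 1 ⌊x⌋₊ | ∃ p q, A ≤ p ∧ P p ∧ R p q ∧ p * q ∣ n} : ℝ) ≤
      x * ∑ p ∈ Icc A ⌊x⌋₊ with P p, ∑ q ∈ Icc 1 ⌊x⌋₊ with R p q, 1 / ((p : ℝ) * q) := by
  have h := card_filter_exists_dvd_le
    (({p ∈ Icc A ⌊x⌋₊ | P p}).sigma fun p => {q ∈ Icc 1 ⌊x⌋₊ | R p q}) (fun d => d.1 * d.2) hx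
  simp only [sum_sigma, Nat.cast_mul] at h
  refine h.trans' ?_
  gcongr with n hn
  rintro ⟨p, q, hAp, hp, hq, hd⟩
  obtain ⟨hn1, hnx⟩ := mem_Icc.1 hn
  have hpq : 0 < p * q := Nat.pos_of_dvd_of_pos hd hn1
  exact ⟨⟨p, q⟩, by simp [*, (Nat.le_of_dvd hn1 (dvd_of_mul_right_dvd hd)).trans hnx,
    (Nat.le_of_dvd hn1 (dvd_of_mul_left_dvd hd)).trans hnx, Nat.one_le_iff_ne_zero,
    (Nat.pos_of_mul_pos_left hpq).ne'], hd⟩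

/-! ### Sums over primes -/

lemma le_sub_of_antitoneOn_of_hasDerivAt {g G : ℝ → ℝ} {a : ℝ}
    (hg : AntitoneOn g (Set.Icc a (a + 1))) (hG : ∀ t ∈ Set.Icc a (a + 1), HasDerivAt G (g t) t) :
    g (a + 1) ≤ G (a + 1) - G a := by
  obtain ⟨t, ht, htG⟩ := exists_hasDerivAt_eq_slope G g (lt_add_one a)
    (fun t ht => (hG t ht).continuousAt.continuousWithinAt)
    fun t ht => hG t (Set.Ioo_subset_Icc_self ht)
  rw [add_sub_cancel_left, div_one] at htG
  exact htG ▸ hg (Set.Ioo_subset_Icc_self ht) (Set.right_mem_Icc.2 (by linarith)) ht.2.le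

lemma sum_Icc_mul_le_of_hasDerivAt {w : ℕ → ℝ} {g G : ℝ → ℝ} {c : ℝ} {A B : ℕ} (hAB : A ≤ B)
    (hw : ∀ j, 0 ≤ w j) (hwc : ∀ J, ∑ j ∈ range J, w j ≤ c * J)
    (hg : AntitoneOn g (Set.Ici (A : ℝ))) (hg0 : ∀ t : ℝ, A ≤ t → 0 ≤ g t)
    (hG : ∀ t : ℝ, A ≤ t → HasDerivAt G (g t) t) :
    ∑ j ∈ Icc A B, w j * g j ≤ c * ((A + 1) * g A + (G B - G A)) := by
  have hc : 0 ≤ c := by simpa using (sum_nonneg fun j _ => hw j).trans (hwc 1)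
  suffices h : ∑ j ∈ Icc A B, w j * g j + (c * (B + 1) - ∑ j ∈ range (B + 1), w j) * g B ≤
      c * ((A + 1) * g A + (G B - G A)) by
    have hB : 0 ≤ g B := hg0 B (Nat.cast_le.2 hAB)
    have hwB := hwc (B + 1)
    push_cast at hwB
    nlinarith
  -- Abel summation: carrying the slack of the partial sums at `B` makes the induction close.
  induction B, hAB using Nat.le_induction with
  | base =>
    have hA : 0 ≤ g A := hg0 A le_rfl
    have hwA : 0 ≤ ∑ j ∈ range A, w j := sum_nonneg fun j _ => hw j
    rw [Icc_self, sum_singleton, sum_range_succ]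
    nlinarith
  | succ m hAm ih =>
    have hAm' : (A : ℝ) ≤ m := Nat.cast_le.2 hAm
    have hsub : Set.Icc (m : ℝ) (m + 1) ⊆ Set.Ici (A : ℝ) :=
      Set.Icc_subset_Ici_self.trans (Set.Ici_subset_Ici.2 hAm')
    have hstep : g (m + 1) ≤ G (m + 1) - G m :=
      le_sub_of_antitoneOn_of_hasDerivAt (hg.mono hsub) fun t ht => hG t (hsub ht)
    have hanti : g (m + 1) ≤ g m := hg hAm' (hsub (by simp)) (by simp)
    have hwm := hwc (m + 1)
    rw [← insert_Icc_right_eq_Icc_add_one (hAm.trans m.le_succ), sum_insert (by simp),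
      sum_range_succ _ (m + 1)]
    push_cast at hwm ⊢
    nlinarith [mul_nonneg (sub_nonneg.2 hanti) (sub_nonneg.2 hwm),
      mul_le_mul_of_nonneg_left hstep hc]

lemma sum_prime_log_le (J : ℕ) : ∑ p ∈ Icc 0 J with p.Prime, log p ≤ 3 / 2 * J := by
  have h := Chebyshev.theta_le_log4_mul_x (Nat.cast_nonneg (α := ℝ) J)
  rw [Chebyshev.theta_eq_sum_Icc, Nat.floor_natCast] at h
  refine h.trans ?_
  gcongr
  rw [show (4 : ℝ) = 2 ^ 2 by norm_num, log_pow]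
  norm_num
  linarith [log_two_lt_d9]

lemma sum_prime_log_mul_le_of_hasDerivAt {g G : ℝ → ℝ} {A B : ℕ} (hAB : A ≤ B)
    (hg : AntitoneOn g (Set.Ici (A : ℝ))) (hg0 : ∀ t : ℝ, A ≤ t → 0 ≤ g t)
    (hG : ∀ t : ℝ, A ≤ t → HasDerivAt G (g t) t) :
    ∑ p ∈ Icc A B with p.Prime, log p * g p ≤ 3 / 2 * ((A + 1) * g A + (G B - G A)) := by
  refine le_trans (le_of_eq ?_) (sum_Icc_mul_le_of_hasDerivAt
    (w := fun j => if j.Prime then log j else 0) hAB (fun j => ?_) (fun J => ?_) hg hg0 hG)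
  · simp only [sum_filter, ite_mul, zero_mul]
  · split_ifs <;> positivity
  · rw [← sum_filter]
    refine le_trans (sum_le_sum_of_subset_of_nonneg (fun p hp => ?_) fun p _ _ => by positivity)
      (sum_prime_log_le J)
    simp only [mem_filter, mem_range, mem_Icc] at hp ⊢
    exact ⟨⟨p.zero_le, hp.1.le⟩, hp.2⟩

lemma sum_prime_log_div_sq_le {A : ℕ} (hA : 1 ≤ A) (B : ℕ) :
    ∑ p ∈ Icc A B with p.Prime, log p / (p : ℝ) ^ 2 ≤ 5 / A := by
  have hA' : (1 : ℝ) ≤ A := Nat.one_le_cast.2 hA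
  rcases lt_or_ge B A with hAB | hAB
  · simpa [Icc_eq_empty_of_lt hAB] using by positivity
  have hanti : AntitoneOn (fun t : ℝ => (t ^ 2)⁻¹) (Set.Ici A) := fun a ha b _ hab => by
    have : 0 < a := hA'.trans_lt' one_pos |>.trans_le ha
    dsimp only
    gcongr
  have h := sum_prime_log_mul_le_of_hasDerivAt (G := fun t => -t⁻¹) hAB hanti
    (fun t _ => by positivity)
    fun t ht => (hasDerivAt_inv (by linarith : t ≠ 0)).fun_neg.congr_deriv (neg_neg _)
  calc ∑ p ∈ Icc A B with p.Prime, log p / (p : ℝ) ^ 2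
      ≤ 3 / 2 * (((A : ℝ) + 1) / (A : ℝ) ^ 2 + (-(B : ℝ)⁻¹ - -(A : ℝ)⁻¹)) := by
        simpa only [← div_eq_mul_inv] using h
    _ ≤ 3 / 2 * (((A : ℝ) + A) / (A : ℝ) ^ 2 + (0 + (A : ℝ)⁻¹)) := by
        rw [sub_neg_eq_add]
        gcongr
        simp
    _ = 9 / 2 / A := by field
    _ ≤ 5 / A := by gcongr; norm_num

lemma sum_prime_log_div_le {A B : ℕ} (hA : 1 ≤ A) (hAB : A ≤ B) :
    ∑ p ∈ Icc A B with p.Prime, log p / (p : ℝ) ≤ 2 * (2 + log B - log A) := by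
  have hA' : (1 : ℝ) ≤ A := Nat.one_le_cast.2 hA
  have h := sum_prime_log_mul_le_of_hasDerivAt (g := fun t => t⁻¹) (G := log) hAB
    (fun a ha b _ hab => inv_anti₀ (hA'.trans_lt' one_pos |>.trans_le ha) hab)
    (fun t ht => inv_nonneg.2 (by linarith)) (fun t ht => hasDerivAt_log (by linarith))
  simp only [← div_eq_mul_inv] at h
  have hAA : ((A : ℝ) + 1) / A ≤ 2 := by
    rw [div_le_iff₀ (by linarith)]
    linarith
  have hlog : log A ≤ log B := by gcongr
  linarith

lemma one_le_log_of_three_le {t : ℝ} (ht : 3 ≤ t) : 1 ≤ log t :=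
  (le_log_iff_exp_le (by linarith)).2 (by linarith [exp_one_lt_d9])

lemma sum_prime_inv_mul_log_le {A : ℕ} (hA : 3 ≤ A) (B : ℕ) :
    ∑ p ∈ Icc A B with p.Prime, 1 / ((p : ℝ) * log p) ≤ 5 / log A := by
  have hA' : (3 : ℝ) ≤ A := by exact_mod_cast hA
  have hlog {t : ℝ} (ht : A ≤ t) : 1 ≤ log t := one_le_log_of_three_le (hA'.trans ht)
  have hlogA := hlog le_rfl
  rcases lt_or_ge B A with hAB | hAB
  · simpa [Icc_eq_empty_of_lt hAB] using by positivity
  have hanti : AntitoneOn (fun t : ℝ => (t * log t ^ 2)⁻¹) (Set.Ici A) := fun a ha b _ hab => by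
    have : 0 < a := by linarith [Set.mem_Ici.1 ha]
    have : 0 < b := this.trans_le hab
    have := hlog ha
    dsimp only
    gcongr
  have hderiv (t : ℝ) (ht : A ≤ t) :
      HasDerivAt (fun t => -(log t)⁻¹) ((t * log t ^ 2)⁻¹) t := by
    have := hlog ht
    have ht0 : t ≠ 0 := by linarith
    exact ((hasDerivAt_log ht0).fun_inv (by positivity)).fun_neg.congr_deriv (by field)
  calc ∑ p ∈ Icc A B with p.Prime, 1 / ((p : ℝ) * log p)
      = ∑ p ∈ Icc A B with p.Prime, log p * ((p : ℝ) * log p ^ 2)⁻¹ := by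
        refine sum_congr rfl fun p hp => ?_
        have := hlog (Nat.cast_le.2 (mem_Icc.1 (mem_filter.1 hp).1).1)
        field
    _ ≤ 3 / 2 * ((A + 1) * ((A : ℝ) * log A ^ 2)⁻¹ + (-(log B)⁻¹ - -(log A)⁻¹)) :=
        sum_prime_log_mul_le_of_hasDerivAt hAB hanti
          (fun t ht => by have : 0 < t := by linarith
                          positivity) hderiv
    _ ≤ 3 / 2 * ((A + A) * ((A : ℝ) * log A)⁻¹ + (0 + (log A)⁻¹)) := by
        rw [sub_neg_eq_add]
        gcongr
        · linarith
        · exact le_self_pow₀ hlogA two_ne_zero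
        · exact neg_nonpos.2 (by positivity)
    _ = 9 / 2 / log A := by field
    _ ≤ 5 / log A := by gcongr; norm_num

/-! ### Squarefull divisors and largest prime factors -/

lemma squarefull_prime_pow {q v : ℕ} (hq : q.Prime) (hv : 2 ≤ v) : Squarefull (q ^ v) := by
  intro p hp hpq
  rw [(Nat.prime_dvd_prime_iff_eq hp hq).1 (hp.dvd_of_dvd_pow hpq)]
  exact pow_dvd_pow q hv

lemma Squarefull.exists_sq_dvd_le_cube {r : ℕ} (h : Squarefull r) (hr : r ≠ 0) :
    ∃ d, d ^ 2 ∣ r ∧ r ≤ d ^ 3 := by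
  obtain ⟨a, b, hab, ha⟩ := Nat.sq_mul_squarefree r
  have hb0 : b ≠ 0 := by rintro rfl; simp_all
  have ha_dvd : a ∣ b := by
    rw [← Nat.prod_primeFactors_of_squarefree ha]
    refine prod_primes_dvd b (fun p hp => (Nat.prime_of_mem_primeFactors hp).prime) fun p hp => ?_
    have hpp := Nat.prime_of_mem_primeFactors hp
    have hpr : p ^ 2 ∣ r := h p hpp (hab ▸ (Nat.dvd_of_mem_primeFactors hp).mul_left _)
    rw [← hab, mul_comm, sq p] at hpr
    exact hpp.dvd_of_dvd_pow (ha.dvd_of_squarefree_of_mul_dvd_mul_right hpr)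
  refine ⟨b, hab ▸ dvd_mul_right _ _, ?_⟩
  calc r = b ^ 2 * a := hab.symm
    _ ≤ b ^ 2 * b := by gcongr; exact Nat.le_of_dvd (Nat.pos_of_ne_zero hb0) ha_dvd
    _ = b ^ 3 := by ring

lemma sum_Icc_inv_sq_le {A : ℕ} (hA : 1 ≤ A) (B : ℕ) :
    ∑ d ∈ Icc A B, 1 / (d : ℝ) ^ 2 ≤ (2 : ℝ) / A := by
  have h := sum_Ioo_inv_sq_le (α := ℝ) (A - 1) (B + 1)
  rw [← Nat.cast_add_one, Nat.sub_add_cancel hA] at h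
  refine h.trans_eq' (sum_congr ?_ fun d _ => (one_div _).symm)
  ext d
  simp only [mem_Icc, mem_Ioo]
  omega

lemma isSparse_exists_sq_dvd {z : ℝ → ℝ} (hz : Tendsto z atTop atTop) :
    IsSparse fun x n => ∃ d : ℕ, z x ≤ d ∧ d ^ 2 ∣ n := by
  refine isSparse_of_card_le (hz.const_div_atTop 2) ?_
  filter_upwards [eventually_ge_atTop 0, hz.eventually_gt_atTop 0] with x hx hzx
  have hA : 1 ≤ ⌈z x⌉₊ := Nat.one_le_ceil_iff.2 hzx
  calc (#{n ∈ Icc 1 ⌊x⌋₊ | ∃ d : ℕ, z x ≤ d ∧ d ^ 2 ∣ n} : ℝ)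
      ≤ #{n ∈ Icc 1 ⌊x⌋₊ | ∃ d ∈ Icc ⌈z x⌉₊ ⌊x⌋₊, d ^ 2 ∣ n} := by
        refine Nat.cast_le.2 (card_le_card (monotone_filter_right _ fun n hn => ?_))
        rintro ⟨d, hzd, hd⟩
        obtain ⟨hn1, hnx⟩ := mem_Icc.1 hn
        have hdn : d ≤ n := Nat.le_of_dvd hn1 ((dvd_pow_self d two_ne_zero).trans hd)
        exact ⟨d, mem_Icc.2 ⟨Nat.ceil_le.2 hzd, hdn.trans hnx⟩, hd⟩
    _ ≤ x * ∑ d ∈ Icc ⌈z x⌉₊ ⌊x⌋₊, 1 / ((d ^ 2 : ℕ) : ℝ) := card_filter_exists_dvd_le _ _ hx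
    _ ≤ x * (2 / z x) := by
        gcongr
        simp only [Nat.cast_pow]
        exact (sum_Icc_inv_sq_le hA _).trans (by gcongr; exact Nat.le_ceil _)
    _ = 2 / z x * x := mul_comm _ _

lemma isSparse_exists_squarefull_dvd {y : ℝ → ℝ} (hy : Tendsto y atTop atTop) :
    IsSparse fun x n => ∃ r, Squarefull r ∧ r ∣ n ∧ y x < r := by
  have hz : Tendsto (fun x => y x ^ (3 : ℝ)⁻¹) atTop atTop :=
    (tendsto_rpow_atTop (by norm_num)).comp hy
  refine (isSparse_exists_sq_dvd hz).mono ?_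
  filter_upwards [hy.eventually_ge_atTop 0] with x hyx n hn
  rintro ⟨r, hr, hrn, hyr⟩
  have hr0 : r ≠ 0 := ne_zero_of_dvd_ne_zero (by have := mem_Icc.1 hn; omega) hrn
  obtain ⟨d, hdr, hrd⟩ := hr.exists_sq_dvd_le_cube hr0
  refine ⟨d, ?_, hdr.trans hrn⟩
  rw [rpow_inv_le_iff_of_pos hyx d.cast_nonneg (by norm_num)]
  calc y x ≤ r := hyr.le
    _ ≤ (d : ℝ) ^ 3 := by exact_mod_cast hrd
    _ = (d : ℝ) ^ (3 : ℝ) := by norm_cast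

lemma le_Pplus {n p : ℕ} (hn : n ≠ 0) (hp : p.Prime) (h : p ∣ n) : p ≤ Pplus n := by
  have hmem : p ∈ n.primeFactors := Nat.mem_primeFactors.2 ⟨hp, h, hn⟩
  rw [Pplus, dif_pos ⟨p, hmem⟩]
  exact le_max' _ _ hmem

lemma Pplus_mem_primeFactors {n : ℕ} (hn : 1 < n) : Pplus n ∈ n.primeFactors := by
  have h : n.primeFactors.Nonempty := Nat.nonempty_primeFactors.2 hn
  rw [Pplus, dif_pos h]
  exact max'_mem _ h

lemma Pplus_one : Pplus 1 = 1 := by simp [Pplus]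

lemma factorization_factorial_le_two_mul_div {p : ℕ} (hp : p.Prime) (N : ℕ) :
    (N.factorial.factorization p : ℝ) ≤ 2 * N / p := by
  have hp2 : (2 : ℝ) ≤ p := by exact_mod_cast hp.two_le
  calc (N.factorial.factorization p : ℝ) ≤ (N : ℝ) / (p - 1 : ℕ) :=
        (Nat.cast_le.2 (Nat.factorization_factorial_le_div_pred hp N)).trans Nat.cast_div_le
    _ = N / ((p : ℝ) - 1) := by rw [Nat.cast_pred hp.pos]
    _ ≤ N / ((p : ℝ) / 2) := by gcongr; linarith
    _ = 2 * N / p := by field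

lemma log_le_of_dvd_factorial {Q N k : ℕ} (hk : 1 ≤ k) (hQ : Q ∣ N.factorial)
    (hQk : ∀ p ∈ Q.primeFactors, p ≤ k) : log Q ≤ 4 * N * (2 + log k) := by
  have hQ0 : Q ≠ 0 := ne_zero_of_dvd_ne_zero N.factorial_ne_zero hQ
  calc log Q = ∑ p ∈ Q.primeFactors, (Q.factorization p : ℝ) * log p :=
        log_nat_eq_sum_factorization Q
    _ ≤ ∑ p ∈ Q.primeFactors, 2 * N / p * log p := by
        gcongr with p hp
        exact (Nat.cast_le.2 ((Nat.factorization_le_iff_dvd hQ0 N.factorial_ne_zero).2 hQ p)).trans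
          (factorization_factorial_le_two_mul_div (Nat.prime_of_mem_primeFactors hp) N)
    _ ≤ ∑ p ∈ Icc 1 k with p.Prime, 2 * N / p * log p := by
        refine sum_le_sum_of_subset_of_nonneg (fun p hp => ?_) fun p _ _ => by positivity
        have hpp := Nat.prime_of_mem_primeFactors hp
        exact mem_filter.2 ⟨mem_Icc.2 ⟨hpp.one_le, hQk p hp⟩, hpp⟩
    _ = 2 * N * ∑ p ∈ Icc 1 k with p.Prime, log p / p := by
        rw [mul_sum]
        exact sum_congr rfl fun p _ => by ring
    _ ≤ 2 * N * (2 * (2 + log k - log (1 : ℕ))) := by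
        gcongr
        exact sum_prime_log_div_le le_rfl hk
    _ = 4 * N * (2 + log k) := by
        rw [Nat.cast_one, log_one]
        ring

lemma sum_log_Pplus_le {k : ℕ} (hk : 1 ≤ k) (N : ℕ) :
    ∑ n ∈ Icc 1 N with Pplus n ≤ k, log n ≤ 4 * N * (2 + log k) := by
  have hpos (n : ℕ) (hn : n ∈ {n ∈ Icc 1 N | Pplus n ≤ k}) : n ≠ 0 := by
    simp only [mem_filter, mem_Icc] at hn
    omega
  rw [← log_prod fun n hn => Nat.cast_ne_zero.2 (hpos n hn), ← Nat.cast_prod]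
  refine log_le_of_dvd_factorial hk ?_ fun p hp => ?_
  · rw [← prod_range_add_one_eq_factorial, range_eq_Ico, prod_Ico_add' (fun n => n),
      zero_add, Ico_add_one_right_eq_Icc]
    exact prod_dvd_prod_of_subset _ _ _ (filter_subset _ _)
  · have hpp := Nat.prime_of_mem_primeFactors hp
    obtain ⟨n, hn, hpn⟩ := hpp.prime.exists_mem_finset_dvd (Nat.dvd_of_mem_primeFactors hp)
    exact (le_Pplus (hpos n hn) hpp hpn).trans (mem_filter.1 hn).2

lemma card_Pplus_le_of_sqrt_lt {x z : ℝ} (hx : 1 < x) (hz : 1 ≤ z) :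
    (#{n ∈ Icc 1 ⌊x⌋₊ | √x < ((n : ℕ) : ℝ) ∧ (Pplus n : ℝ) ≤ z} : ℝ) ≤
      8 * ((2 + log z) / log x) * x := by
  have hlog : 0 < log x := log_pos hx
  have hk : 1 ≤ ⌊z⌋₊ := Nat.one_le_floor_iff _ |>.2 hz
  suffices h : #{n ∈ Icc 1 ⌊x⌋₊ | √x < ((n : ℕ) : ℝ) ∧ (Pplus n : ℝ) ≤ z} * (log x / 2) ≤
      4 * x * (2 + log z) by
    rw [show 8 * ((2 + log z) / log x) * x = 4 * x * (2 + log z) / (log x / 2) by field]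
    rwa [le_div_iff₀ (by positivity)]
  calc #{n ∈ Icc 1 ⌊x⌋₊ | √x < ((n : ℕ) : ℝ) ∧ (Pplus n : ℝ) ≤ z} * (log x / 2)
      ≤ ∑ n ∈ Icc 1 ⌊x⌋₊ with √x < ((n : ℕ) : ℝ) ∧ (Pplus n : ℝ) ≤ z, log n := by
        rw [← nsmul_eq_mul, ← log_sqrt (by linarith)]
        refine card_nsmul_le_sum _ _ _ fun n hn => log_le_log (by positivity) ?_
        exact (mem_filter.1 hn).2.1.le
    _ ≤ ∑ n ∈ Icc 1 ⌊x⌋₊ with Pplus n ≤ ⌊z⌋₊, log n := by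
        refine sum_le_sum_of_subset_of_nonneg ?_ fun n _ _ => by positivity
        exact monotone_filter_right _ fun n _ h => Nat.le_floor h.2
    _ ≤ 4 * ⌊x⌋₊ * (2 + log ⌊z⌋₊) := sum_log_Pplus_le hk _
    _ ≤ 4 * x * (2 + log z) := by
        gcongr
        · exact Nat.floor_le (by linarith)
        · exact Nat.floor_le (by linarith)

lemma isSparse_Pplus_le {z : ℝ → ℝ} (hz1 : ∀ᶠ x in atTop, 1 ≤ z x)
    (hz : (fun x => log (z x)) =o[atTop] log) : IsSparse fun x n => (Pplus n : ℝ) ≤ z x := by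
  have hlog : Tendsto (fun x => 8 * ((2 + log (z x)) / log x)) atTop (𝓝 0) := by
    simpa using ((isLittleO_const_log_atTop (c := 2)).add hz).tendsto_div_nhds_zero.const_mul 8
  have hlarge : IsSparse fun x n => √x < (n : ℝ) ∧ (Pplus n : ℝ) ≤ z x := by
    refine isSparse_of_card_le hlog ?_
    filter_upwards [eventually_gt_atTop 1, hz1] with x hx hzx
    exact card_Pplus_le_of_sqrt_lt hx hzx
  refine ((isSparse_le_div tendsto_sqrt_atTop).or hlarge).mono (Eventually.of_forall ?_)
  intro x n _ hn
  rw [div_sqrt]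
  exact (le_or_gt _ _).imp_right fun h => ⟨h, hn⟩

lemma isSparse_Pplus_sq_dvd : IsSparse fun _ n => Pplus n ^ 2 ∣ n := by
  have hsmooth : IsSparse fun x n => (Pplus n : ℝ) ≤ log x :=
    isSparse_Pplus_le (tendsto_log_atTop.eventually_ge_atTop 1)
      (isLittleO_log_id_atTop.comp_tendsto tendsto_log_atTop)
  refine (hsmooth.or (isSparse_exists_sq_dvd tendsto_log_atTop)).mono (Eventually.of_forall ?_)
  intro x n _ hn
  exact (le_total _ _).imp_right fun h => ⟨Pplus n, h, hn⟩

/-! ### Primes in arithmetic progressions -/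

lemma dvd_prod_mul_add_of_coprime {k M J : ℕ} (hk : k.Coprime M) (hkJ : k ∣ J.factorial) (a : ℕ) :
    k ∣ ∏ j ∈ range J, (M * j + a) := by
  have hk0 : k ≠ 0 := ne_zero_of_dvd_ne_zero J.factorial_ne_zero hkJ
  obtain ⟨b, -, hb⟩ := Nat.exists_mul_mod_eq_of_coprime a hk.symm hk0
  suffices h : ∏ j ∈ range J, (M * j + a) ≡ M ^ J * b.ascFactorial J [MOD k] from
    h.dvd_iff dvd_rfl |>.2 <| (hkJ.trans (Nat.factorial_dvd_ascFactorial b J)).mul_left _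
  rw [Nat.ascFactorial_eq_prod_range, ← card_range J, ← prod_const, card_range, ← prod_mul_distrib]
  refine Nat.ModEq.prod fun j _ => ?_
  rw [mul_add, add_comm]
  exact Nat.ModEq.add_right _ hb.symm

lemma factorial_dvd_pow_mul_prod (M a J : ℕ) :
    J.factorial ∣ M ^ J * ∏ j ∈ range J, (M * j + a) := by
  rw [Nat.dvd_iff_prime_pow_dvd_dvd]
  intro p k hp hk
  by_cases hpM : p ∣ M
  · have hkJ : k ≤ J := by
      have h := ((hp.pow_dvd_iff_le_factorization J.factorial_ne_zero).1 hk).trans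
        (Nat.factorization_factorial_le_div_pred hp J)
      exact h.trans (Nat.div_le_self _ _)
    exact ((pow_dvd_pow p hkJ).trans (pow_dvd_pow_of_dvd hpM J)).mul_right _
  · exact (dvd_prod_mul_add_of_coprime (((Nat.Prime.coprime_iff_not_dvd hp).2 hpM).pow_left k)
      hk a).mul_left _

lemma factorial_mul_prod_prime_le {M a : ℕ} (ha : 0 < a) (haM : a ≤ M) (J : ℕ) :
    J.factorial * ∏ j ∈ range J with (M * j + a).Prime ∧ J < M * j + a, (M * j + a) ≤
      M ^ J * (M * J) ^ J := by
  have hdvd : J.factorial * ∏ j ∈ range J with (M * j + a).Prime ∧ J < M * j + a, (M * j + a) ∣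
      M ^ J * ∏ j ∈ range J, (M * j + a) := by
    refine Nat.Coprime.mul_dvd_of_dvd_of_dvd (Nat.Coprime.prod_right fun j hj => ?_)
      (factorial_dvd_pow_mul_prod M a J)
      ((prod_dvd_prod_of_subset _ _ _ (filter_subset _ _)).mul_left _)
    obtain ⟨-, hp, hJ⟩ := mem_filter.1 hj
    exact (Nat.coprime_factorial_iff hp.ne_one).2 (by rwa [hp.minFac_eq]) |>.symm
  refine (Nat.le_of_dvd ?_ hdvd).trans ?_
  · have hM : 0 < M := ha.trans_le haM
    exact mul_pos (pow_pos hM J) (prod_pos fun j _ => by positivity)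
  · gcongr
    refine (prod_le_prod' fun j hj => ?_).trans_eq (by rw [prod_const, card_range])
    rw [mem_range] at hj
    nlinarith

lemma sum_log_prime_mul_add_of_lt_le {M a : ℕ} (ha : 0 < a) (haM : a ≤ M) (J : ℕ) :
    ∑ j ∈ range J with (M * j + a).Prime ∧ J < M * j + a, log (M * j + a : ℕ) ≤
      (2 * log M + 1) * J := by
  have hM : (0 : ℝ) < M := by exact_mod_cast ha.trans_le haM
  have hpos (j : ℕ) : (0 : ℝ) < (M * j + a : ℕ) := by positivity
  rw [← log_prod fun j _ => (hpos j).ne']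
  calc log (∏ j ∈ range J with (M * j + a).Prime ∧ J < M * j + a, ((M * j + a : ℕ) : ℝ))
      ≤ log ((M : ℝ) ^ J * (M * J) ^ J / J.factorial) := by
        refine log_le_log (prod_pos fun j _ => hpos j) ?_
        rw [le_div_iff₀' (by positivity)]
        exact_mod_cast factorial_mul_prod_prime_le ha haM J
    _ = log ((M : ℝ) ^ (2 * J) * ((J : ℝ) ^ J / J.factorial)) := by
        rw [mul_pow, two_mul, pow_add]
        ring_nf
    _ ≤ log ((M : ℝ) ^ (2 * J) * exp J) := by
        rcases J.eq_zero_or_pos with rfl | hJ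
        · simp
        gcongr
        exact pow_div_factorial_le_exp _ J.cast_nonneg J
    _ = (2 * log M + 1) * J := by
        rw [log_mul (by positivity) (by positivity), log_pow, log_exp]
        push_cast
        ring

lemma sum_log_prime_mul_add_le {M a : ℕ} (ha : 0 < a) (haM : a ≤ M) (J : ℕ) :
    ∑ j ∈ range J with (M * j + a).Prime, log (M * j + a : ℕ) ≤ (2 * log M + 5 / 2) * J := by
  have hM : M ≠ 0 := (ha.trans_le haM).ne'
  have hsmall : ∑ j ∈ range J with (M * j + a).Prime ∧ ¬ J < M * j + a, log (M * j + a : ℕ) ≤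
      3 / 2 * J := by
    refine le_trans ?_ (sum_prime_log_le J)
    rw [← sum_image (f := fun q : ℕ => log q) (g := fun j => M * j + a) fun i _ j _ hij => by
      simpa [hM] using hij]
    refine sum_le_sum_of_subset_of_nonneg (image_subset_iff.2 fun j hj => ?_)
      fun q _ _ => by positivity
    obtain ⟨-, hp, hJ⟩ := mem_filter.1 hj
    exact mem_filter.2 ⟨mem_Icc.2 ⟨Nat.zero_le _, not_lt.1 hJ⟩, hp⟩
  calc ∑ j ∈ range J with (M * j + a).Prime, log (M * j + a : ℕ)
      = ∑ j ∈ range J with (M * j + a).Prime ∧ J < M * j + a, log (M * j + a : ℕ) +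
        ∑ j ∈ range J with (M * j + a).Prime ∧ ¬ J < M * j + a, log (M * j + a : ℕ) := by
        rw [← filter_filter, ← filter_filter, sum_filter_add_sum_filter_not]
    _ ≤ (2 * log M + 1) * J + 3 / 2 * J :=
        add_le_add (sum_log_prime_mul_add_of_lt_le ha haM J) hsmall
    _ = (2 * log M + 5 / 2) * J := by ring

lemma sum_Icc_div_mul_log_le {w : ℕ → ℝ} {c : ℝ} {A B : ℕ} (hA : 3 ≤ A) (hAB : A ≤ B)
    (hw : ∀ j, 0 ≤ w j) (hwc : ∀ J, ∑ j ∈ range J, w j ≤ c * J) :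
    ∑ j ∈ Icc A B, w j / (j * log j) ≤ c * (2 + log (log B)) := by
  have hA' : (3 : ℝ) ≤ A := by exact_mod_cast hA
  have hlog {t : ℝ} (ht : A ≤ t) : 1 ≤ log t := one_le_log_of_three_le (hA'.trans ht)
  have hc : 0 ≤ c := by simpa using (sum_nonneg fun j _ => hw j).trans (hwc 1)
  have hanti : AntitoneOn (fun t : ℝ => (t * log t)⁻¹) (Set.Ici A) := fun s hs t _ hst => by
    have : 0 < s := by linarith [Set.mem_Ici.1 hs]
    have : 0 < t := this.trans_le hst
    have := hlog hs
    dsimp only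
    gcongr
  have hderiv (t : ℝ) (ht : A ≤ t) : HasDerivAt (fun t => log (log t)) ((t * log t)⁻¹) t := by
    have ht0 : t ≠ 0 := by linarith
    have := hlog ht
    exact ((hasDerivAt_log ht0).log (by positivity)).congr_deriv (by field)
  have hnonneg (t : ℝ) (ht : A ≤ t) : 0 ≤ (t * log t)⁻¹ := by
    have := hlog ht
    have : 0 < t := by linarith
    positivity
  calc ∑ j ∈ Icc A B, w j / (j * log j)
      ≤ c * ((A + 1) * ((A : ℝ) * log A)⁻¹ + (log (log B) - log (log A))) :=
        sum_Icc_mul_le_of_hasDerivAt hAB hw hwc hanti hnonneg hderiv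
    _ ≤ c * (2 * A * ((A : ℝ) * 1)⁻¹ + (log (log B) - 0)) := by
        have := hlog le_rfl
        gcongr
        · linarith
        · exact log_nonneg this
    _ = c * (2 + log (log B)) := by field

lemma sum_Icc_prime_mul_add_inv_le {M a N : ℕ} (hM : 3 ≤ M) (ha : 0 < a) (haM : a ≤ M)
    (hMN : M ≤ N) :
    ∑ j ∈ Icc M N with (M * j + a).Prime, 1 / ((M * j + a : ℕ) : ℝ) ≤
      5 * log M / M * (2 + log (log N)) := by
  have hlogM : 1 ≤ log M := one_le_log_of_three_le (by exact_mod_cast hM)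
  have hloglogN : 0 ≤ log (log N) :=
    log_nonneg (one_le_log_of_three_le (by exact_mod_cast hM.trans hMN))
  have hsum := sum_Icc_div_mul_log_le (c := 2 * log M + 5 / 2)
    (w := fun j => if (M * j + a).Prime then log (M * j + a : ℕ) else 0) hM hMN
    (fun j => by split_ifs <;> positivity)
    (fun J => by simpa only [sum_filter] using sum_log_prime_mul_add_le ha haM J)
  calc ∑ j ∈ Icc M N with (M * j + a).Prime, 1 / ((M * j + a : ℕ) : ℝ)
      ≤ ∑ j ∈ Icc M N with (M * j + a).Prime, 1 / M * (log (M * j + a : ℕ) / (j * log j)) := by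
        gcongr with j hj
        have hMj : M ≤ j := (mem_Icc.1 (mem_filter.1 hj).1).1
        have hj : 1 < (j : ℝ) := by exact_mod_cast (by omega : 1 < j)
        have hlogj : 0 < log j := log_pos hj
        have hle : (M * j : ℝ) ≤ (M * j + a : ℕ) := by push_cast; linarith [a.cast_nonneg (α := ℝ)]
        have hle' : (j : ℝ) ≤ (M * j + a : ℕ) := by exact_mod_cast (by nlinarith : j ≤ M * j + a)
        calc 1 / ((M * j + a : ℕ) : ℝ) ≤ 1 / (M * j : ℝ) := by gcongr
          _ = 1 / M * (log j / (j * log j)) := by field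
          _ ≤ 1 / M * (log (M * j + a : ℕ) / (j * log j)) := by gcongr
    _ = 1 / M * ∑ j ∈ Icc M N, (if (M * j + a).Prime then log (M * j + a : ℕ) else 0) /
          ((j : ℝ) * log j) := by
        simp only [← mul_sum, sum_filter, ite_div, zero_div]
    _ ≤ 1 / M * ((2 * log M + 5 / 2) * (2 + log (log N))) := by gcongr
    _ ≤ 1 / M * (5 * log M * (2 + log (log N))) := by gcongr; linarith
    _ = 5 * log M / M * (2 + log (log N)) := by ring

lemma sum_prime_mod_eq_inv_le {M N a : ℕ} (hM : 3 ≤ M) (hN : 3 ≤ N) (ha : 0 < a) (haM : a ≤ M) :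
    ∑ q ∈ Icc (M ^ 2) N with q.Prime ∧ q % M = a, 1 / (q : ℝ) ≤
      5 * log M / M * (2 + log (log N)) := by
  have hM0 : 0 < M := by omega
  rcases lt_or_ge N M with hNM | hMN
  · rw [Icc_eq_empty_of_lt (hNM.trans_le (Nat.le_pow two_pos)), filter_empty, sum_empty]
    have := one_le_log_of_three_le (t := N) (by exact_mod_cast hN)
    have := log_nonneg this
    positivity
  refine le_trans ?_ (sum_Icc_prime_mul_add_inv_le hM ha haM hMN)
  rw [← sum_image (f := fun q : ℕ => 1 / (q : ℝ)) (g := fun j => M * j + a) fun i _ j _ hij => by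
    simpa [hM0.ne'] using hij]
  refine sum_le_sum_of_subset_of_nonneg (fun q hq => ?_) fun q _ _ => by positivity
  obtain ⟨hqI, hqp, rfl⟩ := mem_filter.1 hq
  rw [mem_Icc] at hqI
  refine mem_image.2 ⟨q / M, mem_filter.2 ⟨mem_Icc.2 ⟨?_, (Nat.div_le_self q M).trans hqI.2⟩, ?_⟩,
    Nat.div_add_mod q M⟩
  · rw [Nat.le_div_iff_mul_le hM0, ← sq]
    exact hqI.1
  · rwa [Nat.div_add_mod]

lemma card_filter_dvd_add_one_coprime_le {p W : ℕ} (hpW : p.Coprime W) :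
    #{a ∈ range (p * W) | p ∣ a + 1 ∧ W.Coprime a} ≤ W.totient := by
  rw [Nat.totient_eq_card_coprime]
  refine card_le_card_of_injOn (· % W) (fun a ha => ?_) fun a ha b hb hab => ?_
  · simp only [coe_filter, mem_range, Set.mem_ofPred_eq] at ha ⊢
    obtain ⟨haM, -, haW⟩ := ha
    have hW : 0 < W := Nat.pos_of_mul_pos_left ((Nat.zero_le a).trans_lt haM)
    rw [Nat.coprime_iff_gcd_eq_one, Nat.gcd_rec] at haW
    exact ⟨Nat.mod_lt _ hW, Nat.coprime_comm.1 haW⟩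
  · simp only [coe_filter, mem_range, Set.mem_ofPred_eq] at ha hb
    have hp : a ≡ b [MOD p] := Nat.ModEq.add_right_cancel' 1 <|
      ((Nat.modEq_zero_iff_dvd.2 ha.2.1).trans (Nat.modEq_zero_iff_dvd.2 hb.2.1).symm)
    exact ((Nat.modEq_and_modEq_iff_modEq_mul hpW).1 ⟨hp, hab⟩).eq_of_lt_of_lt ha.1 hb.1

lemma dvd_mod_mul_add_one_and_coprime_mod_mul {p W q : ℕ} (hW : 1 ≤ W) (hq : q.Prime) (hWq : W < q)
    (hpq : p ∣ q + 1) : p ∣ q % (p * W) + 1 ∧ W.Coprime (q % (p * W)) := by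
  have hmod : q % (p * W) ≡ q [MOD p * W] := Nat.mod_modEq q _
  have hcop : q.Coprime W := hq.coprime_iff_not_dvd.2 (Nat.not_dvd_of_pos_of_lt hW hWq)
  exact ⟨((hmod.of_dvd (dvd_mul_right p W)).add_right 1).dvd_iff dvd_rfl |>.2 hpq,
    Nat.Coprime.symm ((hmod.of_dvd (dvd_mul_left W p)).gcd_eq.trans hcop)⟩

lemma sum_Icc_dvd_add_one_inv_le {p : ℕ} (hp : p ≠ 0) (B : ℕ) :
    ∑ q ∈ Icc 1 B with p ∣ q + 1, 1 / (q : ℝ) ≤ 2 / p * (1 + log (B + 1 : ℕ)) := by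
  calc ∑ q ∈ Icc 1 B with p ∣ q + 1, 1 / (q : ℝ)
      ≤ ∑ q ∈ Icc 1 B with p ∣ q + 1, 2 * (1 / ((q + 1 : ℕ) : ℝ)) := by
        gcongr with q hq
        have hq1 : (1 : ℝ) ≤ q := by exact_mod_cast (mem_Icc.1 (mem_filter.1 hq).1).1
        rw [mul_one_div, div_le_div_iff₀ (by positivity) (by positivity)]
        push_cast
        linarith
    _ = ∑ m ∈ image (fun q : ℕ => q + 1) {q ∈ Icc 1 B | p ∣ q + 1}, 2 * (1 / (m : ℝ)) :=
        (sum_image (f := fun m : ℕ => 2 * (1 / (m : ℝ))) (add_left_injective 1).injOn).symm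
    _ ≤ ∑ m ∈ image (fun k => p * k) (Icc 1 (B + 1)), 2 * (1 / (m : ℝ)) := by
        refine sum_le_sum_of_subset_of_nonneg (image_subset_iff.2 fun q hq => ?_)
          fun m _ _ => by positivity
        obtain ⟨hqB, k, hk⟩ := mem_filter.1 hq
        rw [mem_Icc] at hqB
        have hk0 : 0 < k := Nat.pos_of_ne_zero (by rintro rfl; simp at hk)
        have hkq : k ≤ q + 1 := hk ▸ Nat.le_mul_of_pos_left k (Nat.pos_of_ne_zero hp)
        exact mem_image.2 ⟨k, mem_Icc.2 ⟨hk0, by omega⟩, hk.symm⟩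
    _ = 2 / p * (harmonic (B + 1) : ℝ) := by
        rw [sum_image (mul_right_injective₀ hp).injOn, harmonic_eq_sum_Icc, Rat.cast_sum, mul_sum]
        refine sum_congr rfl fun k _ => ?_
        push_cast
        ring
    _ ≤ 2 / p * (1 + log (B + 1 : ℕ)) := by
        gcongr
        exact harmonic_le_one_add_log _

lemma sum_prime_dvd_add_one_Icc_sq_inv_le {p W N : ℕ} (hp : p.Prime) (hp3 : 3 ≤ p) (hW : 1 ≤ W)
    (hWp : W < p) (hN : 3 ≤ N) :
    ∑ q ∈ Icc ((p * W) ^ 2) N with q.Prime ∧ p ∣ q + 1, 1 / (q : ℝ) ≤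
      10 * log p / p * (W.totient / W * (2 + log (log N))) := by
  set M := p * W with hMdef
  have hpM : p ≤ M := Nat.le_mul_of_pos_right p hW
  have hWM : W < M ^ 2 := hWp.trans_le (hpM.trans (Nat.le_self_pow two_ne_zero M))
  have hcop : p.Coprime W := (hp.coprime_iff_not_dvd).2 (Nat.not_dvd_of_pos_of_lt hW hWp)
  set R := {a ∈ range M | p ∣ a + 1 ∧ W.Coprime a}
  have hlogN : 0 ≤ log (log N) := log_nonneg (one_le_log_of_three_le (by exact_mod_cast hN))
  have hmod : ∀ q ∈ {q ∈ Icc (M ^ 2) N | q.Prime ∧ p ∣ q + 1}, q % M ∈ R := by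
    intro q hq
    obtain ⟨hqI, hqp, hpq⟩ := mem_filter.1 hq
    exact mem_filter.2 ⟨mem_range.2 (Nat.mod_lt _ (by omega)),
      dvd_mod_mul_add_one_and_coprime_mod_mul hW hqp (hWM.trans_le (mem_Icc.1 hqI).1) hpq⟩
  calc ∑ q ∈ Icc (M ^ 2) N with q.Prime ∧ p ∣ q + 1, 1 / (q : ℝ)
      = ∑ a ∈ R, ∑ q ∈ {q ∈ Icc (M ^ 2) N | q.Prime ∧ p ∣ q + 1} with q % M = a, 1 / (q : ℝ) :=
        (sum_fiberwise_of_maps_to hmod _).symm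
    _ ≤ ∑ a ∈ R, 5 * log M / M * (2 + log (log N)) := by
        refine sum_le_sum fun a ha => ?_
        obtain ⟨haM, hpa, -⟩ := mem_filter.1 ha
        have ha : 0 < a := Nat.pos_of_ne_zero fun h0 => by
          have := Nat.le_of_dvd (by omega) hpa
          omega
        refine le_trans (sum_le_sum_of_subset_of_nonneg (fun q hq => ?_) fun q _ _ => by positivity)
          (sum_prime_mod_eq_inv_le (hp3.trans hpM) hN ha (mem_range.1 haM).le)
        simp only [mem_filter] at hq ⊢
        exact ⟨hq.1.1, hq.1.2.1, hq.2⟩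
    _ ≤ W.totient * (5 * log M / M * (2 + log (log N))) := by
        rw [sum_const, nsmul_eq_mul]
        gcongr
        exact card_filter_dvd_add_one_coprime_le hcop
    _ ≤ W.totient * (5 * (2 * log p) / M * (2 + log (log N))) := by
        gcongr
        rw [← Nat.cast_ofNat (R := ℝ) (n := 2), ← log_pow, sq]
        exact log_le_log (by exact_mod_cast hp.pos.trans_le hpM)
          (by exact_mod_cast Nat.mul_le_mul_left p hWp.le)
    _ = 10 * log p / p * (W.totient / W * (2 + log (log N))) := by
        rw [hMdef, Nat.cast_mul]
        field

lemma sum_prime_dvd_add_one_inv_le {p W N : ℕ} (hp : p.Prime) (hp3 : 3 ≤ p) (hW : 1 ≤ W)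
    (hWp : W < p) (hN : 3 ≤ N) :
    ∑ q ∈ Icc 1 N with q.Prime ∧ p ∣ q + 1, 1 / (q : ℝ) ≤
      10 * log p / p * (1 + W.totient / W * (2 + log (log N))) := by
  have hlogp : 1 ≤ log p := one_le_log_of_three_le (by exact_mod_cast hp3)
  have hM : 1 ≤ p * W := Nat.mul_pos hp.pos hW
  have hle : (p * W) ^ 2 + 1 ≤ p ^ 4 :=
    calc (p * W) ^ 2 + 1 ≤ (p * W + 1) ^ 2 := by linarith [sq_nonneg (p * W)]
      _ ≤ (p ^ 2) ^ 2 := by gcongr; nlinarith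
      _ = p ^ 4 := by ring
  have hsub : {q ∈ Icc 1 N | q.Prime ∧ p ∣ q + 1} ⊆
      {q ∈ Icc 1 ((p * W) ^ 2) | p ∣ q + 1} ∪
        {q ∈ Icc ((p * W) ^ 2) N | q.Prime ∧ p ∣ q + 1} := by
    intro q
    simp only [mem_filter, mem_union, mem_Icc]
    have := le_total q ((p * W) ^ 2)
    tauto
  calc ∑ q ∈ Icc 1 N with q.Prime ∧ p ∣ q + 1, 1 / (q : ℝ)
      ≤ ∑ q ∈ Icc 1 ((p * W) ^ 2) with p ∣ q + 1, 1 / (q : ℝ) +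
          ∑ q ∈ Icc ((p * W) ^ 2) N with q.Prime ∧ p ∣ q + 1, 1 / (q : ℝ) := by
        refine (sum_le_sum_of_subset_of_nonneg hsub fun q _ _ => by positivity).trans ?_
        rw [← sum_union_inter]
        exact le_add_of_nonneg_right (sum_nonneg fun q _ => by positivity)
    _ ≤ 10 * log p / p + 10 * log p / p * (W.totient / W * (2 + log (log N))) := by
        gcongr
        · refine (sum_Icc_dvd_add_one_inv_le hp.ne_zero _).trans ?_
          calc 2 / p * (1 + log ((p * W) ^ 2 + 1 : ℕ)) ≤ 2 / p * (log p + log ((p : ℝ) ^ 4)) := by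
                gcongr
                exact_mod_cast hle
            _ = 10 * log p / p := by
                rw [log_pow]
                push_cast
                ring
        · exact sum_prime_dvd_add_one_Icc_sq_inv_le hp hp3 hW hWp hN
    _ = 10 * log p / p * (1 + W.totient / W * (2 + log (log N))) := by ring

lemma sum_sum_prime_dvd_add_one_inv_le {A W N : ℕ} (hA : 3 ≤ A) (hW : 1 ≤ W) (hWA : W < A)
    (hN : 3 ≤ N) :
    ∑ p ∈ Icc A N with p.Prime, ∑ q ∈ Icc 1 N with q.Prime ∧ p ∣ q + 1, 1 / ((p : ℝ) * q) ≤
      50 / A * (1 + W.totient / W * (2 + log (log N))) := by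
  have hlogN : 0 ≤ log (log N) := log_nonneg (one_le_log_of_three_le (by exact_mod_cast hN))
  calc ∑ p ∈ Icc A N with p.Prime, ∑ q ∈ Icc 1 N with q.Prime ∧ p ∣ q + 1, 1 / ((p : ℝ) * q)
      = ∑ p ∈ Icc A N with p.Prime, 1 / (p : ℝ) *
          ∑ q ∈ Icc 1 N with q.Prime ∧ p ∣ q + 1, 1 / (q : ℝ) := by
        simp only [mul_sum, one_div, mul_inv]
    _ ≤ ∑ p ∈ Icc A N with p.Prime, 1 / (p : ℝ) *
          (10 * log p / p * (1 + W.totient / W * (2 + log (log N)))) := by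
        gcongr with p hp
        obtain ⟨hpI, hpp⟩ := mem_filter.1 hp
        have hAp : A ≤ p := (mem_Icc.1 hpI).1
        exact sum_prime_dvd_add_one_inv_le hpp (hA.trans hAp) hW (hWA.trans_le hAp) hN
    _ = 10 * (∑ p ∈ Icc A N with p.Prime, log p / (p : ℝ) ^ 2) *
          (1 + W.totient / W * (2 + log (log N))) := by
        rw [mul_sum, sum_mul]
        exact sum_congr rfl fun p _ => by ring
    _ ≤ 10 * (5 / A) * (1 + W.totient / W * (2 + log (log N))) := by
        gcongr
        exact sum_prime_log_div_sq_le (by omega) N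
    _ = 50 / A * (1 + W.totient / W * (2 + log (log N))) := by ring

lemma card_exists_prime_dvd_add_one_le {x y : ℝ} {W : ℕ} (hx : 3 ≤ x) (hy : 3 ≤ y) (hW : 1 ≤ W)
    (hWy : W < y) :
    (#{n ∈ Icc 1 ⌊x⌋₊ | ∃ p q : ℕ, p.Prime ∧ q.Prime ∧ p ∣ q + 1 ∧ p * q ∣ n ∧ y < p} : ℝ) ≤
      50 / y * (1 + W.totient / W * (2 + log (log x))) * x := by
  have hyA : y ≤ ⌈y⌉₊ := Nat.le_ceil y
  have hA : 3 ≤ ⌈y⌉₊ := by exact_mod_cast hy.trans hyA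
  have hN : 3 ≤ ⌊x⌋₊ := Nat.le_floor hx
  have hlogN : 1 ≤ log ⌊x⌋₊ := one_le_log_of_three_le (by exact_mod_cast hN)
  have hloglogN : 0 ≤ log (log ⌊x⌋₊) := log_nonneg hlogN
  calc (#{n ∈ Icc 1 ⌊x⌋₊ | ∃ p q : ℕ, p.Prime ∧ q.Prime ∧ p ∣ q + 1 ∧ p * q ∣ n ∧ y < p} : ℝ)
      ≤ #{n ∈ Icc 1 ⌊x⌋₊ | ∃ p q : ℕ, ⌈y⌉₊ ≤ p ∧ p.Prime ∧ (q.Prime ∧ p ∣ q + 1) ∧ p * q ∣ n} := by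
        refine Nat.cast_le.2 (card_le_card (monotone_filter_right _ fun n _ => ?_))
        rintro ⟨p, q, hp, hq, hpq, hn, hyp⟩
        exact ⟨p, q, Nat.ceil_le.2 hyp.le, hp, ⟨hq, hpq⟩, hn⟩
    _ ≤ x * ∑ p ∈ Icc ⌈y⌉₊ ⌊x⌋₊ with p.Prime,
          ∑ q ∈ Icc 1 ⌊x⌋₊ with q.Prime ∧ p ∣ q + 1, 1 / ((p : ℝ) * q) :=
        card_filter_exists_mul_dvd_le Nat.Prime (fun p q => q.Prime ∧ p ∣ q + 1) _ (by linarith)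
    _ ≤ x * (50 / ⌈y⌉₊ * (1 + W.totient / W * (2 + log (log ⌊x⌋₊)))) := by
        gcongr
        exact sum_sum_prime_dvd_add_one_inv_le hA hW (by exact_mod_cast hWy.trans_le hyA) hN
    _ ≤ x * (50 / y * (1 + W.totient / W * (2 + log (log x)))) := by
        gcongr
        exact Nat.floor_le (by linarith)
    _ = 50 / y * (1 + W.totient / W * (2 + log (log x))) * x := mul_comm _ _

lemma totient_prod_primes {S : Finset ℕ} (hS : ∀ p ∈ S, p.Prime) :
    ((∏ p ∈ S, p).totient : ℝ) = (∏ p ∈ S, p : ℕ) * ∏ p ∈ S, (1 - (p : ℝ)⁻¹) := by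
  have h := congrArg (Rat.cast : ℚ → ℝ) (Nat.totient_eq_mul_prod_factors (∏ p ∈ S, p))
  rw [Nat.primeFactors_prod hS] at h
  push_cast at h ⊢
  exact h

lemma exists_totient_div_le {ε : ℝ} (hε : 0 < ε) :
    ∃ W : ℕ, 1 ≤ W ∧ (W.totient / W : ℝ) ≤ ε := by
  obtain ⟨n, hn⟩ := ((not_summable_iff_tendsto_nat_atTop_of_nonneg fun n =>
    Set.indicator_nonneg (fun m _ => by positivity) n).1
      not_summable_one_div_on_primes).eventually_ge_atTop (-log ε) |>.exists
  set S := {p ∈ range n | p.Prime}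
  have hS : ∀ p ∈ S, p.Prime := fun p hp => (mem_filter.1 hp).2
  have hS0 : ∏ p ∈ S, p ≠ 0 := prod_ne_zero_iff.2 fun p hp => (hS p hp).ne_zero
  have hn' : -log ε ≤ ∑ p ∈ S, (p : ℝ)⁻¹ := by
    simpa [S, sum_filter, Set.indicator_apply] using hn
  refine ⟨∏ p ∈ S, p, Nat.one_le_iff_ne_zero.2 hS0, ?_⟩
  rw [totient_prod_primes hS, mul_div_cancel_left₀ _ (Nat.cast_ne_zero.2 hS0)]
  calc ∏ p ∈ S, (1 - (p : ℝ)⁻¹) ≤ ∏ p ∈ S, exp (-(p : ℝ)⁻¹) := by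
        refine prod_le_prod (fun p hp => sub_nonneg.2 ?_) fun p _ => one_sub_le_exp_neg _
        exact inv_le_one_of_one_le₀ (Nat.one_le_cast.2 (hS p hp).one_le)
    _ = exp (-∑ p ∈ S, (p : ℝ)⁻¹) := by rw [← exp_sum, sum_neg_distrib]
    _ ≤ exp (log ε) := exp_le_exp.2 (by linarith)
    _ = ε := exp_log hε

lemma isSparse_exists_prime_dvd_add_one {y : ℝ → ℝ} (hy : Tendsto y atTop atTop)
    (hlog : (fun x => log (log x)) =O[atTop] y) :
    IsSparse fun x n => ∃ p q : ℕ, p.Prime ∧ q.Prime ∧ p ∣ q + 1 ∧ p * q ∣ n ∧ y x < p := by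
  refine isSparse_of_forall_card_le fun ε hε => ?_
  obtain ⟨C, hC, hlogC⟩ := hlog.exists_pos
  obtain ⟨W, hW, hWε⟩ := exists_totient_div_le (ε := ε / (100 * C)) (by positivity)
  have hWone : (W.totient / W : ℝ) ≤ 1 :=
    div_le_one_of_le₀ (Nat.cast_le.2 W.totient_le) W.cast_nonneg
  filter_upwards [hlogC.bound, eventually_ge_atTop 3, hy.eventually_ge_atTop 3,
    hy.eventually_gt_atTop W, hy.eventually_ge_atTop (300 / ε)] with x hlogx hx hy3 hyW hyε
  have hloglog : log (log x) ≤ C * y x :=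
    (le_norm_self _).trans (hlogx.trans_eq (by rw [norm_of_nonneg (by linarith)]))
  refine (card_exists_prime_dvd_add_one_le hx hy3 hW hyW).trans ?_
  gcongr
  calc 50 / y x * (1 + W.totient / W * (2 + log (log x)))
      ≤ 50 / y x * (1 + (1 * 2 + ε / (100 * C) * (C * y x))) := by
        rw [mul_add (W.totient / W : ℝ)]
        gcongr
        exact log_nonneg (one_le_log_of_three_le hx)
    _ = 150 / y x + ε / 2 := by field
    _ ≤ 150 / (300 / ε) + ε / 2 := by gcongr
    _ = ε := by field

/-! ### Common prime factors of `n` and `σ(n)` -/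

lemma sigma_one_prime_pow_lt {q : ℕ} (hq : q.Prime) (v : ℕ) :
    ArithmeticFunction.sigma 1 (q ^ v) < 2 * q ^ v := by
  rw [ArithmeticFunction.sigma_one_apply_prime_pow hq, sum_range_succ]
  have h := Nat.geomSum_lt (m := q) (n := v) (s := range v) hq.two_le fun _ => mem_range.1
  omega

lemma exists_prime_pow_dvd_of_dvd_sigma1 {n p : ℕ} (hn : n ≠ 0) (hp : p.Prime)
    (h : p ∣ sigma1 n) :
    ∃ q v : ℕ, q.Prime ∧ 1 ≤ v ∧ q ^ v ∣ n ∧ p ∣ ArithmeticFunction.sigma 1 (q ^ v) := by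
  rw [sigma1, ArithmeticFunction.isMultiplicative_sigma.multiplicative_factorization _ hn,
    Finsupp.prod, Prime.dvd_finsetProd_iff hp.prime] at h
  obtain ⟨q, hq, hpq⟩ := h
  rw [Nat.support_factorization, Nat.mem_primeFactors] at hq
  exact ⟨q, n.factorization q, hq.1, (hq.1.dvd_iff_one_le_factorization hn).1 hq.2.1,
    Nat.ordProj_dvd n q, hpq⟩

lemma exists_of_prime_dvd_gcd_sigma1 {n p : ℕ} (hn : n ≠ 0) (hp : p.Prime)
    (h : p ∣ n.gcd (sigma1 n)) :
    (∃ q, q.Prime ∧ p ∣ q + 1 ∧ p * q ∣ n) ∨ ∃ r, Squarefull r ∧ r ∣ n ∧ p < 2 * r := by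
  obtain ⟨hpn, hpσ⟩ := Nat.dvd_gcd_iff.1 h
  obtain ⟨q, v, hq, hv, hqn, hpq⟩ := exists_prime_pow_dvd_of_dvd_sigma1 hn hp hpσ
  obtain rfl | hv2 := hv.eq_or_lt'
  · rw [pow_one] at hqn hpq
    have hpq1 : p ∣ q + 1 := by
      rwa [ArithmeticFunction.sigma_one_apply, hq.sum_divisors] at hpq
    have hne : p ≠ q := by
      rintro rfl
      exact hp.not_dvd_one ((Nat.dvd_add_right dvd_rfl).1 hpq1)
    exact Or.inl ⟨q, hq, hpq1, ((Nat.coprime_primes hp hq).2 hne).mul_dvd_of_dvd_of_dvd hpn hqn⟩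
  · have hσ : ArithmeticFunction.sigma 1 (q ^ v) ≠ 0 := by
      simpa using (pow_pos hq.pos v).ne'
    exact Or.inr ⟨q ^ v, squarefull_prime_pow hq hv2, hqn,
      (Nat.le_of_dvd (Nat.pos_of_ne_zero hσ) hpq).trans_lt (sigma_one_prime_pow_lt hq v)⟩

lemma isSparse_exists_prime_dvd_gcd_sigma1 {y : ℝ → ℝ} (hy : Tendsto y atTop atTop)
    (hlog : (fun x => log (log x)) =O[atTop] y) :
    IsSparse fun x n => ∃ p : ℕ, p.Prime ∧ p ∣ n.gcd (sigma1 n) ∧ y x < p := by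
  refine ((isSparse_exists_prime_dvd_add_one hy hlog).or
    (isSparse_exists_squarefull_dvd (hy.atTop_div_const two_pos))).mono (Eventually.of_forall ?_)
  rintro x n hn ⟨p, hp, hpn, hyp⟩
  have hn0 : n ≠ 0 := Nat.one_le_iff_ne_zero.1 (mem_Icc.1 hn).1
  refine (exists_of_prime_dvd_gcd_sigma1 hn0 hp hpn).imp ?_ ?_
  · rintro ⟨q, hq, hpq, hd⟩
    exact ⟨p, q, hp, hq, hpq, hd, hyp⟩
  · rintro ⟨r, hr, hrn, hpr⟩
    refine ⟨r, hr, hrn, ?_⟩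
    have : (p : ℝ) < 2 * r := by exact_mod_cast hpr
    linarith

/-! ### The two largest prime factors -/

lemma sum_prime_lt_le_mul_inv_le {p N : ℕ} {X : ℝ} (hX : 1 ≤ X) (hp : 3 ≤ p)
    (hXp : 2 * log X ≤ log p) :
    ∑ q ∈ Icc 1 N with q.Prime ∧ q < p ∧ (p : ℝ) ≤ q * X, 1 / (q : ℝ) ≤
      4 * (2 + log X) / log p := by
  have hp0 : (0 : ℝ) < p := by positivity
  have hlogp : 1 ≤ log p := one_le_log_of_three_le (by exact_mod_cast hp)
  have hB : 1 ≤ ⌈p / X⌉₊ := Nat.one_le_ceil_iff.2 (by positivity)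
  have hBp : ⌈p / X⌉₊ ≤ p := Nat.ceil_le.2 (div_le_self hp0.le hX)
  have hlogB : log p - log X ≤ log ⌈p / X⌉₊ := by
    rw [← log_div hp0.ne' (by positivity)]
    exact log_le_log (by positivity) (Nat.le_ceil _)
  calc ∑ q ∈ Icc 1 N with q.Prime ∧ q < p ∧ (p : ℝ) ≤ q * X, 1 / (q : ℝ)
      ≤ ∑ q ∈ Icc ⌈p / X⌉₊ p with q.Prime, 1 / (q : ℝ) := by
        refine sum_le_sum_of_subset_of_nonneg (fun q hq => ?_) fun q _ _ => by positivity
        obtain ⟨-, hqp, hlt, hle⟩ := mem_filter.1 hq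
        exact mem_filter.2
          ⟨mem_Icc.2 ⟨Nat.ceil_le.2 ((div_le_iff₀ (by linarith)).2 hle), hlt.le⟩, hqp⟩
    _ ≤ ∑ q ∈ Icc ⌈p / X⌉₊ p with q.Prime, 2 / log p * (log q / q) := by
        gcongr with q hq
        obtain ⟨hqI, hqp⟩ := mem_filter.1 hq
        have hq0 : (0 : ℝ) < q := by exact_mod_cast hqp.pos
        have hlogq : log ⌈p / X⌉₊ ≤ log q :=
          log_le_log (by exact_mod_cast hB) (Nat.cast_le.2 (mem_Icc.1 hqI).1)
        rw [div_mul_div_comm, div_le_div_iff₀ hq0 (by positivity)]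
        nlinarith
    _ ≤ 2 / log p * (2 * (2 + log p - log ⌈p / X⌉₊)) := by
        rw [← mul_sum]
        gcongr
        exact sum_prime_log_div_le hB hBp
    _ ≤ 2 / log p * (2 * (2 + log X)) := by gcongr; linarith
    _ = 4 * (2 + log X) / log p := by ring

lemma sum_sum_prime_lt_le_mul_inv_le {A N : ℕ} {X : ℝ} (hA : 3 ≤ A) (hX : 1 ≤ X)
    (hXA : 2 * log X ≤ log A) :
    ∑ p ∈ Icc A N with p.Prime, ∑ q ∈ Icc 1 N with q.Prime ∧ q < p ∧ (p : ℝ) ≤ q * X,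
      1 / ((p : ℝ) * q) ≤ 20 * (2 + log X) / log A := by
  have hlogX : 0 ≤ log X := log_nonneg hX
  calc ∑ p ∈ Icc A N with p.Prime, ∑ q ∈ Icc 1 N with q.Prime ∧ q < p ∧ (p : ℝ) ≤ q * X,
        1 / ((p : ℝ) * q)
      = ∑ p ∈ Icc A N with p.Prime, 1 / (p : ℝ) *
          ∑ q ∈ Icc 1 N with q.Prime ∧ q < p ∧ (p : ℝ) ≤ q * X, 1 / (q : ℝ) := by
        simp only [mul_sum, one_div, mul_inv]
    _ ≤ ∑ p ∈ Icc A N with p.Prime, 1 / (p : ℝ) * (4 * (2 + log X) / log p) := by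
        gcongr with p hp
        have hAp : A ≤ p := (mem_Icc.1 (mem_filter.1 hp).1).1
        exact sum_prime_lt_le_mul_inv_le hX (hA.trans hAp) (hXA.trans (by gcongr))
    _ = 4 * (2 + log X) * ∑ p ∈ Icc A N with p.Prime, 1 / ((p : ℝ) * log p) := by
        rw [mul_sum]
        exact sum_congr rfl fun p _ => by ring
    _ ≤ 4 * (2 + log X) * (5 / log A) := by
        gcongr
        exact sum_prime_inv_mul_log_le hA N
    _ = 20 * (2 + log X) / log A := by ring

lemma card_exists_prime_lt_le_mul_le {x T X : ℝ} (hx : 0 ≤ x) (hT : 3 ≤ T) (hX : 1 ≤ X)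
    (hXT : 2 * log X ≤ log T) :
    (#{n ∈ Icc 1 ⌊x⌋₊ | ∃ p q : ℕ, p.Prime ∧ q.Prime ∧ q < p ∧ p * q ∣ n ∧ T < p ∧
      (p : ℝ) ≤ q * X} : ℝ) ≤ 20 * ((2 + log X) / log T) * x := by
  have hTA : T ≤ ⌈T⌉₊ := Nat.le_ceil T
  have hA : 3 ≤ ⌈T⌉₊ := by exact_mod_cast hT.trans hTA
  have hlogT : 1 ≤ log T := one_le_log_of_three_le hT
  have hlogTA : log T ≤ log ⌈T⌉₊ := log_le_log (by linarith) hTA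
  have hlogX : 0 ≤ log X := log_nonneg hX
  calc (#{n ∈ Icc 1 ⌊x⌋₊ | ∃ p q : ℕ, p.Prime ∧ q.Prime ∧ q < p ∧ p * q ∣ n ∧ T < p ∧
        (p : ℝ) ≤ q * X} : ℝ)
      ≤ #{n ∈ Icc 1 ⌊x⌋₊ | ∃ p q : ℕ, ⌈T⌉₊ ≤ p ∧ p.Prime ∧
          (q.Prime ∧ q < p ∧ (p : ℝ) ≤ q * X) ∧ p * q ∣ n} := by
        refine Nat.cast_le.2 (card_le_card (monotone_filter_right _ fun n _ => ?_))
        rintro ⟨p, q, hp, hq, hqp, hn, hTp, hpX⟩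
        exact ⟨p, q, Nat.ceil_le.2 hTp.le, hp, ⟨hq, hqp, hpX⟩, hn⟩
    _ ≤ x * ∑ p ∈ Icc ⌈T⌉₊ ⌊x⌋₊ with p.Prime,
          ∑ q ∈ Icc 1 ⌊x⌋₊ with q.Prime ∧ q < p ∧ (p : ℝ) ≤ q * X, 1 / ((p : ℝ) * q) :=
        card_filter_exists_mul_dvd_le Nat.Prime (fun p q => q.Prime ∧ q < p ∧ (p : ℝ) ≤ q * X) _ hx
    _ ≤ x * (20 * (2 + log X) / log ⌈T⌉₊) := by
        gcongr
        exact sum_sum_prime_lt_le_mul_inv_le hA hX (hXT.trans hlogTA)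
    _ ≤ x * (20 * (2 + log X) / log T) := by gcongr
    _ = 20 * ((2 + log X) / log T) * x := by ring

lemma isSparse_exists_prime_lt_le_mul {T X : ℝ → ℝ} (hT : Tendsto T atTop atTop)
    (hX : ∀ᶠ x in atTop, 1 ≤ X x)
    (hXT : (fun x => log (X x)) =o[atTop] fun x => log (T x)) :
    IsSparse fun x n => ∃ p q : ℕ, p.Prime ∧ q.Prime ∧ q < p ∧ p * q ∣ n ∧ T x < p ∧
      (p : ℝ) ≤ q * X x := by
  have hlim : Tendsto (fun x => 20 * ((2 + log (X x)) / log (T x))) atTop (𝓝 0) := by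
    simpa using (((isLittleO_const_log_atTop (c := 2)).comp_tendsto hT).add
      hXT).tendsto_div_nhds_zero.const_mul 20
  refine isSparse_of_card_le hlim ?_
  filter_upwards [eventually_ge_atTop 0, hT.eventually_ge_atTop 3, hX,
    hXT.bound (by norm_num : (0 : ℝ) < 1 / 2)] with x hx hTx hXx hlog
  refine card_exists_prime_lt_le_mul_le hx hTx hXx ?_
  rw [norm_of_nonneg (log_nonneg hXx), norm_of_nonneg (log_nonneg (by linarith))] at hlog
  linarith

lemma Pplus_div_Pplus_eq_one_or {n : ℕ} (hn : 1 < n) (h : ¬ Pplus n ^ 2 ∣ n) :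
    Pplus (n / Pplus n) = 1 ∨ (Pplus (n / Pplus n)).Prime ∧ Pplus (n / Pplus n) < Pplus n ∧
      Pplus n * Pplus (n / Pplus n) ∣ n := by
  obtain ⟨hP, hPn, hn0⟩ := Nat.mem_primeFactors.1 (Pplus_mem_primeFactors hn)
  have hm : 0 < n / Pplus n := Nat.div_pos (Nat.le_of_dvd (by omega) hPn) hP.pos
  obtain hm1 | hm1 := (Nat.one_le_iff_ne_zero.2 hm.ne').eq_or_lt'
  · exact Or.inl (by rw [hm1, Pplus_one])
  obtain ⟨hQ, hQm, -⟩ := Nat.mem_primeFactors.1 (Pplus_mem_primeFactors hm1)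
  have hdvd : Pplus n * Pplus (n / Pplus n) ∣ n :=
    (mul_dvd_mul_left _ hQm).trans (Nat.mul_div_cancel' hPn).dvd
  have hne : Pplus (n / Pplus n) ≠ Pplus n := fun heq => h (by rwa [heq, ← sq] at hdvd)
  exact Or.inr ⟨hQ, (le_Pplus hn0 hQ (dvd_of_mul_left_dvd hdvd)).lt_of_ne hne, hdvd⟩

lemma exists_isLittleO_log_between {X : ℝ → ℝ} (hX : ∀ᶠ x in atTop, 1 ≤ X x)
    (hlog : (fun x => log (X x)) =o[atTop] log) :
    ∃ T : ℝ → ℝ, Tendsto T atTop atTop ∧ (fun x => log (X x)) =o[atTop] (fun x => log (T x)) ∧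
      (fun x => log (T x)) =o[atTop] log := by
  set u : ℝ → ℝ := fun x => 1 + log (X x)
  have hu : ∀ᶠ x in atTop, 1 ≤ u x := hX.mono fun x hx => by linarith [log_nonneg hx]
  have hu0 : ∀ᶠ x in atTop, 0 ≤ u x * log x := by
    filter_upwards [hu, eventually_ge_atTop 1] with x hux hx
    exact mul_nonneg (by linarith) (log_nonneg hx)
  have hulog : u =o[atTop] log := isLittleO_const_log_atTop.add hlog
  have hsq : (fun x => √(u x * log x) ^ 2) =ᶠ[atTop] fun x => u x * log x :=
    hu0.mono fun x hx => sq_sqrt hx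
  refine ⟨fun x => exp √(u x * log x), tendsto_exp_atTop.comp (tendsto_sqrt_atTop.comp ?_), ?_, ?_⟩
  · refine tendsto_atTop_mono' _ ?_ tendsto_log_atTop
    filter_upwards [hu, eventually_ge_atTop 1] with x hux hx
    exact le_mul_of_one_le_left (log_nonneg hx) hux
  · simp only [log_exp]
    have hXu : (fun x => log (X x)) =O[atTop] u := IsBigO.of_bound' <| hX.mono fun x hx => by
      have := log_nonneg hx
      rw [norm_of_nonneg this, norm_of_nonneg (by positivity)]
      linarith
    refine hXu.trans_isLittleO (IsLittleO.of_pow ?_ two_ne_zero)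
    refine IsLittleO.congr' ((isBigO_refl u atTop).mul_isLittleO hulog) ?_ hsq.symm
    exact Eventually.of_forall fun x => (sq (u x)).symm
  · simp only [log_exp]
    refine IsLittleO.of_pow (IsLittleO.congr' (hulog.mul_isBigO (isBigO_refl log atTop))
      hsq.symm ?_) two_ne_zero
    exact Eventually.of_forall fun x => (sq (log x)).symm

lemma isSparse_Pplus_le_mul {X : ℝ → ℝ} (hX : ∀ᶠ x in atTop, 1 ≤ X x)
    (hlog : (fun x => log (X x)) =o[atTop] log) :
    IsSparse fun x n => (Pplus n : ℝ) ≤ Pplus (n / Pplus n) * X x := by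
  obtain ⟨T, hT, hXT, hTlog⟩ := exists_isLittleO_log_between hX hlog
  refine ((isSparse_Pplus_le (hT.eventually_ge_atTop 1) hTlog).or (isSparse_Pplus_sq_dvd.or
    (isSparse_exists_prime_lt_le_mul hT hX hXT))).mono ?_
  filter_upwards [hT.eventually_ge_atTop 1, hXT.bound one_pos, hX] with x hTx hb hXx n hn hle
  by_contra! ⟨hTn, hsq, hpq⟩
  have hXT : X x ≤ T x := by
    rw [one_mul, norm_of_nonneg (log_nonneg hXx), norm_of_nonneg (log_nonneg hTx)] at hb
    exact (log_le_log_iff (by linarith) (by linarith)).1 hb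
  have hn1 : 1 < n := by
    refine (mem_Icc.1 hn).1.lt_of_ne ?_
    rintro rfl
    rw [Pplus_one, Nat.cast_one] at hTn
    linarith
  obtain hone | ⟨hQ, hlt, hdvd⟩ := Pplus_div_Pplus_eq_one_or hn1 hsq
  · rw [hone, Nat.cast_one, one_mul] at hle
    linarith
  · have hP := Nat.prime_of_mem_primeFactors (Pplus_mem_primeFactors hn1)
    linarith [hpq _ _ hP hQ hlt hdvd hTn]

lemma isLittleO_log_rpow_one_div {y : ℝ → ℝ} (hy : Tendsto y atTop atTop) :
    (fun x => log (x ^ (1 / y x))) =o[atTop] log := by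
  refine IsLittleO.congr' (((isLittleO_one_iff ℝ).2 (hy.const_div_atTop 1)).mul_isBigO
    (isBigO_refl log atTop)) ?_ (Eventually.of_forall fun x => one_mul _)
  filter_upwards [eventually_gt_atTop 0] with x hx
  exact (log_rpow hx _).symm

lemma eventually_one_le_rpow_one_div {y : ℝ → ℝ} (hy : Tendsto y atTop atTop) :
    ∀ᶠ x in atTop, 1 ≤ x ^ (1 / y x) := by
  filter_upwards [hy.eventually_ge_atTop 0, eventually_ge_atTop 1] with x hyx hx
  exact one_le_rpow hx (by positivity)

end

theorem exceptional_set_is_sparse :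
    (fun x : ℝ => (((Finset.Icc 1 ⌊x⌋₊).filter
        (fun n : ℕ => ¬ ((x / Real.log x < (n : ℝ)) ∧
          (∀ r : ℕ, Squarefull r → r ∣ n → (r : ℝ) ≤ Real.log (Real.log x)) ∧
          (x ^ (1 / (10 * Real.log (Real.log (Real.log x)))) < (Pplus n : ℝ)) ∧
          (¬ Pplus n ^ 2 ∣ n) ∧
          (∀ p : ℕ, p.Prime → p ∣ Nat.gcd n (sigma1 n) → (p : ℝ) ≤ Real.log (Real.log x)) ∧
          ((Pplus (n / Pplus n) : ℝ) * x ^ (1 / (Real.log (Real.log (Real.log x))) ^ 2)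
            < (Pplus n : ℝ))))).card : ℝ))
      =o[atTop] (fun x : ℝ => x) := by
  have hlog₂ : Tendsto (fun x => Real.log (Real.log x)) atTop atTop :=
    Real.tendsto_log_atTop.comp Real.tendsto_log_atTop
  have hlog₃ := Real.tendsto_log_atTop.comp hlog₂
  have hz := hlog₃.const_mul_atTop (by norm_num : (0 : ℝ) < 10)
  have hX := (tendsto_pow_atTop two_ne_zero).comp hlog₃
  have hsize := isSparse_le_div Real.tendsto_log_atTop
  have hsquarefull := isSparse_exists_squarefull_dvd hlog₂
  have hsmooth := isSparse_Pplus_le (eventually_one_le_rpow_one_div hz)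
    (isLittleO_log_rpow_one_div hz)
  have hgcd := isSparse_exists_prime_dvd_gcd_sigma1 hlog₂ (Asymptotics.isBigO_refl _ _)
  have hgap := isSparse_Pplus_le_mul (eventually_one_le_rpow_one_div hX)
    (isLittleO_log_rpow_one_div hX)
  refine (hsize.or <| hsquarefull.or <| hsmooth.or <| isSparse_Pplus_sq_dvd.or <|
    hgcd.or hgap).isLittleO_card_filter (Eventually.of_forall fun x n _ hn => ?_)
  by_contra! ⟨h_size, h_squarefull, h_smooth, h_sq, h_gcd, h_gap⟩
  exact hn ⟨h_size, h_squarefull, h_smooth, h_sq, h_gcd, h_gap⟩
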